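/- Let φ = (φ₁,φ₂,φ₃) ∈ ℝ³ satisfy δ(φ) ≠ 0, where δ(φ) = sin φ₁ sin φ₂ sin φ₃ · cos(φ₁−φ₂) cos(φ₂−φ₃) cos(φ₃−φ₁). Then there exist nonzero complex numbers λ₀, λ₁, λ₂, λ₃, each of which is either real or purely imaginary (equivalently λ_μ² ∈ ℝ for each μ), such that: λ₀² = sin φ₁ sin φ₂ sin φ₃; λ_k² = sin φ_k · cos(φ_k − φ_ℓ) · cos(φ_k − φ_m) for each k ∈ {1,2,3} (with {ℓ,m} = {1,2,3}∖{k}); λ₀λ₁λ₂λ₃ = −δ(φ); and for every cyclic permutation (k,ℓ,m) of (1,2,3): sin(φ_k)·λ_ℓ λ_m + cos(φ_ℓ − φ_m)·λ₀ λ_k = 0. -/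

import Mathlib

/-!
The trigonometry enters only through the evenness of `cos`. Put `sₖ = sin φₖ` and
`cₖ = cos (φₗ - φₘ)`, and choose one square root `aₖ` of each `sₖ` and one square root `dₖ` of each
`cₖ`. Then `λ₀ = -a₁a₂a₃` and `λₖ = aₖ dₗ dₘ` have the required squares. Choosing the roots of the
factors rather than of the products makes the signs coherent, and the single minus sign in `λ₀`
yields both the sign of `λ₀λ₁λ₂λ₃` and the cancellation in the three bilinear relations.
-/

/-- The relations that define rescaling constants `l₀, l 0, l 1, l 2`, the `λ₀, λ₁, λ₂, λ₃`
of the theorem, over an arbitrary commutative ring. Indices are taken modulo 3, so that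
`(k, k + 1, k + 2)` is always a cyclic permutation; `s k` plays the role of the sine of the `k`-th
angle and `c k` that of the cosine of the difference of the two other angles. -/
structure IsRescaling {R : Type*} [CommRing R] (s c : Fin 3 → R) (l₀ : R) (l : Fin 3 → R) :
    Prop where
  sq₀ : l₀ ^ 2 = ∏ k, s k
  sq (k : Fin 3) : l k ^ 2 = s k * (c (k + 2) * c (k + 1))
  mul_prod : l₀ * ∏ k, l k = -((∏ k, s k) * ∏ k, c k)
  bilinear (k : Fin 3) : s k * (l (k + 1) * l (k + 2)) + c k * (l₀ * l k) = 0

namespace IsRescaling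

variable {R : Type*} [CommRing R]

theorem of_sq (a d : Fin 3 → R) :
    IsRescaling (fun k ↦ a k ^ 2) (fun k ↦ d k ^ 2) (-∏ k, a k)
      (fun k ↦ a k * (d (k + 1) * d (k + 2))) where
  sq₀ := by rw [neg_sq, Finset.prod_pow]
  sq k := by ring
  mul_prod := by
    simp only [Fin.prod_univ_three, Fin.reduceAdd]
    ring
  bilinear k := by
    have prod_eq : ∏ j, a j = a k * a (k + 1) * a (k + 2) := by
      rw [← Equiv.prod_comp (Equiv.addLeft k) a, Fin.prod_univ_three]
      simp
    have add_one_add_two : k + 1 + 2 = k := by grind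
    have add_two_add_one : k + 2 + 1 = k := by grind
    have add_one_add_one : k + 1 + 1 = k + 2 := by grind
    have add_two_add_two : k + 2 + 2 = k + 1 := by grind
    simp only [prod_eq, add_one_add_two, add_two_add_one, add_one_add_one, add_two_add_two]
    ring

theorem exists_of_isSquare {s c : Fin 3 → R} (hs : ∀ k, IsSquare (s k))
    (hc : ∀ k, IsSquare (c k)) : ∃ l₀ l, IsRescaling s c l₀ l := by
  choose a ha using fun k ↦ (hs k).exists_sq
  choose d hd using fun k ↦ (hc k).exists_sq
  obtain rfl : s = fun k ↦ a k ^ 2 := funext ha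
  obtain rfl : c = fun k ↦ d k ^ 2 := funext hd
  exact ⟨_, _, of_sq a d⟩

theorem ne_zero {s c l : Fin 3 → R} {l₀ : R} (h : IsRescaling s c l₀ l)
    (hsc : (∏ k, s k) * ∏ k, c k ≠ 0) : l₀ ≠ 0 ∧ ∀ k, l k ≠ 0 := by
  have prod_ne_zero : l₀ * ∏ k, l k ≠ 0 := h.mul_prod ▸ neg_ne_zero.mpr hsc
  exact ⟨left_ne_zero_of_mul prod_ne_zero, fun k hk ↦
    right_ne_zero_of_mul prod_ne_zero (Finset.prod_eq_zero (Finset.mem_univ k) hk)⟩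

theorem im_sq_eq_zero {s c : Fin 3 → ℝ} {l₀ : ℂ} {l : Fin 3 → ℂ}
    (h : IsRescaling (fun k ↦ (s k : ℂ)) (fun k ↦ (c k : ℂ)) l₀ l) :
    (l₀ ^ 2).im = 0 ∧ ∀ k, (l k ^ 2).im = 0 := by
  refine ⟨?_, fun k ↦ ?_⟩
  · rw [h.sq₀, ← Complex.ofReal_prod, Complex.ofReal_im]
  · rw [h.sq, ← Complex.ofReal_mul, ← Complex.ofReal_mul, Complex.ofReal_im]

end IsRescaling

theorem cos_sub_comm (x y : ℝ) : Real.cos (x - y) = Real.cos (y - x) := by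
  rw [← Real.cos_neg, neg_sub]

theorem stmt_7_general {R : Type*} [CommRing R] {s c : Fin 3 → R} (hs : ∀ k, IsSquare (s k))
    (hc : ∀ k, IsSquare (c k)) (hsc : (∏ k, s k) * ∏ k, c k ≠ 0) :
    ∃ l₀ l, l₀ ≠ 0 ∧ (∀ k, l k ≠ 0) ∧ IsRescaling s c l₀ l := by
  obtain ⟨l₀, l, h⟩ := IsRescaling.exists_of_isSquare hs hc
  exact ⟨l₀, l, (h.ne_zero hsc).1, (h.ne_zero hsc).2, h⟩

/-- Existence of the rescaling constants `λ_μ` (each real or purely imaginary)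
with the prescribed squares, product `−δ(φ)` and the three bilinear relations. -/
theorem stmt_7 (φ1 φ2 φ3 : ℝ)
    (hδ : Real.sin φ1 * Real.sin φ2 * Real.sin φ3 *
      (Real.cos (φ1 - φ2) * Real.cos (φ2 - φ3) * Real.cos (φ3 - φ1)) ≠ 0) :
    ∃ l0 l1 l2 l3 : ℂ,
      l0 ≠ 0 ∧ l1 ≠ 0 ∧ l2 ≠ 0 ∧ l3 ≠ 0 ∧
      ((l0 ^ 2).im = 0 ∧ (l1 ^ 2).im = 0 ∧ (l2 ^ 2).im = 0 ∧ (l3 ^ 2).im = 0) ∧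
      l0 ^ 2 = ((Real.sin φ1 * Real.sin φ2 * Real.sin φ3 : ℝ) : ℂ) ∧
      l1 ^ 2 = ((Real.sin φ1 * (Real.cos (φ1 - φ2) * Real.cos (φ1 - φ3)) : ℝ) : ℂ) ∧
      l2 ^ 2 = ((Real.sin φ2 * (Real.cos (φ2 - φ3) * Real.cos (φ2 - φ1)) : ℝ) : ℂ) ∧
      l3 ^ 2 = ((Real.sin φ3 * (Real.cos (φ3 - φ1) * Real.cos (φ3 - φ2)) : ℝ) : ℂ) ∧
      l0 * l1 * l2 * l3 = -((Real.sin φ1 * Real.sin φ2 * Real.sin φ3 *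
        (Real.cos (φ1 - φ2) * Real.cos (φ2 - φ3) * Real.cos (φ3 - φ1)) : ℝ) : ℂ) ∧
      ((Real.sin φ1 : ℂ) * (l2 * l3) + (Real.cos (φ2 - φ3) : ℂ) * (l0 * l1) = 0 ∧
       (Real.sin φ2 : ℂ) * (l3 * l1) + (Real.cos (φ3 - φ1) : ℂ) * (l0 * l2) = 0 ∧
       (Real.sin φ3 : ℂ) * (l1 * l2) + (Real.cos (φ1 - φ2) : ℂ) * (l0 * l3) = 0) := by
  let φ : Fin 3 → ℝ := ![φ1, φ2, φ3]
  let s (k : Fin 3) : ℝ := Real.sin (φ k)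
  let c (k : Fin 3) : ℝ := Real.cos (φ (k + 1) - φ (k + 2))
  have prod_eq : (∏ k, s k) * ∏ k, c k = Real.sin φ1 * Real.sin φ2 * Real.sin φ3 *
      (Real.cos (φ1 - φ2) * Real.cos (φ2 - φ3) * Real.cos (φ3 - φ1)) := by
    simp only [Fin.prod_univ_three]
    rw [mul_rotate (Real.cos (φ1 - φ2))]
    rfl
  obtain ⟨l₀, l, hl₀, hl, h⟩ := stmt_7_general (s := fun k ↦ (s k : ℂ)) (c := fun k ↦ (c k : ℂ))
    (fun _ ↦ Complex.isSquare _) (fun _ ↦ Complex.isSquare _) (by exact_mod_cast prod_eq ▸ hδ)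
  obtain ⟨im_sq₀, im_sq⟩ := h.im_sq_eq_zero
  have sq₀ : l₀ ^ 2 = (s 0 * s 1 * s 2 : ℝ) := by exact_mod_cast h.sq₀.trans (Fin.prod_univ_three _)
  have sq (k : Fin 3) : l k ^ 2 = (s k * (c (k + 2) * c (k + 1)) : ℝ) := by exact_mod_cast h.sq k
  have mul_prod : l₀ * l 0 * l 1 * l 2 = -((∏ k, s k) * ∏ k, c k : ℝ) := by
    rw [mul_assoc, mul_assoc, ← mul_assoc (l 0), ← Fin.prod_univ_three]
    exact_mod_cast h.mul_prod
  rw [cos_sub_comm φ1 φ3, cos_sub_comm φ2 φ1, cos_sub_comm φ3 φ2, ← prod_eq]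
  exact ⟨l₀, l 0, l 1, l 2, hl₀, hl 0, hl 1, hl 2, ⟨im_sq₀, im_sq 0, im_sq 1, im_sq 2⟩,
    sq₀, sq 0, sq 1, sq 2, mul_prod, h.bilinear 0, h.bilinear 1, h.bilinear 2⟩
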